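/- (Sharp-decay integral bounds for the inhomogeneous term.) Fix γ ∈ (0,1/8], let w be the associated weight, and set ϖ(q) := (1+|q|)^{1/2−γ/4} w(q)^{1/2} and D_τ := {x ∈ ℝ³ : τ/2 ≤ |x| ≤ 2τ}. Then: (a) for every δ₀ ∈ (0, γ/4) there is a constant C = C(γ,δ₀) with ∫_0^∞ (1+τ) · sup_{x ∈ D_τ} [ ϖ(|x|−τ) log²(2+τ+|x|) / ((1+τ+|x|)^{2+γ/2} (1+||x|−τ|)^{1/2−γ/2−δ₀} w(|x|−τ)^{1/2}) ] dτ ≤ C; and (b) there is a constant C = C(γ) such that for all t ≥ 0, ∫_0^t (1+τ) · sup_{x ∈ D_τ} [ ϖ(|x|−τ) log²(2+τ+|x|) / ((1+τ+|x|)² (1+||x|−τ|) w(|x|−τ)^{γ/(1+2γ)}) ] dτ ≤ C log³(2+t). -/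

import Mathlib

open MeasureTheory

noncomputable def pd (μ : Fin 4) (f : (Fin 4 → ℝ) → ℝ) (x : Fin 4 → ℝ) : ℝ :=
  fderiv ℝ f x (Pi.single μ 1)

noncomputable def pd3 (i : Fin 3) (f : (Fin 3 → ℝ) → ℝ) (x : Fin 3 → ℝ) : ℝ :=
  fderiv ℝ f x (Pi.single i 1)

noncomputable def rad (p : Fin 4 → ℝ) : ℝ := Real.sqrt (∑ i : Fin 3, (p i.succ) ^ 2)

noncomputable def rad3 (y : Fin 3 → ℝ) : ℝ := Real.sqrt (∑ i : Fin 3, (y i) ^ 2)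

noncomputable def spt (t : ℝ) (y : Fin 3 → ℝ) : Fin 4 → ℝ := ![t, y 0, y 1, y 2]

noncomputable def minkVF : Fin 11 → (Fin 4 → ℝ) → Fin 4 → ℝ :=
  ![fun _ => Pi.single 0 1,
    fun _ => Pi.single 1 1,
    fun _ => Pi.single 2 1,
    fun _ => Pi.single 3 1,
    fun p => p 1 • (Pi.single 2 1 : Fin 4 → ℝ) - p 2 • (Pi.single 1 1 : Fin 4 → ℝ),
    fun p => p 1 • (Pi.single 3 1 : Fin 4 → ℝ) - p 3 • (Pi.single 1 1 : Fin 4 → ℝ),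
    fun p => p 2 • (Pi.single 3 1 : Fin 4 → ℝ) - p 3 • (Pi.single 2 1 : Fin 4 → ℝ),
    fun p => p 0 • (Pi.single 1 1 : Fin 4 → ℝ) + p 1 • (Pi.single 0 1 : Fin 4 → ℝ),
    fun p => p 0 • (Pi.single 2 1 : Fin 4 → ℝ) + p 2 • (Pi.single 0 1 : Fin 4 → ℝ),
    fun p => p 0 • (Pi.single 3 1 : Fin 4 → ℝ) + p 3 • (Pi.single 0 1 : Fin 4 → ℝ),
    fun p => p]

noncomputable def GammaList : List (Fin 11) → ((Fin 4 → ℝ) → ℝ) → (Fin 4 → ℝ) → ℝ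
  | [] => fun f p => f p
  | k :: I => fun f p => fderiv ℝ (GammaList I f) p (minkVF k p)

noncomputable def derivNormSq (f : (Fin 4 → ℝ) → ℝ) (p : Fin 4 → ℝ) : ℝ :=
  ∑ μ : Fin 4, (pd μ f p) ^ 2

noncomputable def derivNorm (f : (Fin 4 → ℝ) → ℝ) (p : Fin 4 → ℝ) : ℝ :=
  Real.sqrt (derivNormSq f p)

noncomputable def dS (f : (Fin 4 → ℝ) → ℝ) (p : Fin 4 → ℝ) : ℝ :=
  (1 / 2) * (pd 0 f p + ∑ i : Fin 3, (p i.succ / rad p) * pd i.succ f p)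

noncomputable def dQ (f : (Fin 4 → ℝ) → ℝ) (p : Fin 4 → ℝ) : ℝ :=
  (1 / 2) * ((∑ i : Fin 3, (p i.succ / rad p) * pd i.succ f p) - pd 0 f p)

noncomputable def angSq (f : (Fin 4 → ℝ) → ℝ) (p : Fin 4 → ℝ) : ℝ :=
  (1 / 2) * (∑ i : Fin 3, ∑ j : Fin 3,
    ((p i.succ / rad p) * pd j.succ f p - (p j.succ / rad p) * pd i.succ f p) ^ 2)

noncomputable def goodNormSq (f : (Fin 4 → ℝ) → ℝ) (p : Fin 4 → ℝ) : ℝ :=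
  (dS f p) ^ 2 + angSq f p

noncomputable def goodNorm (f : (Fin 4 → ℝ) → ℝ) (p : Fin 4 → ℝ) : ℝ :=
  Real.sqrt (goodNormSq f p)

noncomputable def gradSq (f : (Fin 4 → ℝ) → ℝ) (p : Fin 4 → ℝ) : ℝ :=
  (pd 0 f p) ^ 2 + ∑ i : Fin 3, (pd i.succ f p) ^ 2

noncomputable def Lup (p : Fin 4 → ℝ) : Fin 4 → ℝ :=
  ![1, p 1 / rad p, p 2 / rad p, p 3 / rad p]

noncomputable def Llow (p : Fin 4 → ℝ) : Fin 4 → ℝ :=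
  ![-1, p 1 / rad p, p 2 / rad p, p 3 / rad p]

noncomputable def Lbup (p : Fin 4 → ℝ) : Fin 4 → ℝ :=
  ![1, -(p 1 / rad p), -(p 2 / rad p), -(p 3 / rad p)]

noncomputable def Evec : Fin 3 → (Fin 4 → ℝ) → Fin 4 → ℝ :=
  ![fun p => (p 2 / rad p) • (Pi.single 3 1 : Fin 4 → ℝ) - (p 3 / rad p) • (Pi.single 2 1 : Fin 4 → ℝ),
    fun p => (p 1 / rad p) • (Pi.single 3 1 : Fin 4 → ℝ) - (p 3 / rad p) • (Pi.single 1 1 : Fin 4 → ℝ),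
    fun p => (p 1 / rad p) • (Pi.single 2 1 : Fin 4 → ℝ) - (p 2 / rad p) • (Pi.single 1 1 : Fin 4 → ℝ)]

noncomputable def frameVF : Fin 5 → (Fin 4 → ℝ) → Fin 4 → ℝ :=
  ![Lup, Lbup, Evec 0, Evec 1, Evec 2]

noncomputable def mInv : Fin 4 → Fin 4 → ℝ :=
  fun α β => if α = β then (if α = 0 then -1 else 1) else 0

noncomputable def wgt (γ q : ℝ) : ℝ :=
  if 0 ≤ q then 1 + (1 + |q|) ^ (1 + 2 * γ) else 1 + (1 + |q|) ^ (-(γ / 2))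

noncomputable def wgt' (γ q : ℝ) : ℝ :=
  if 0 ≤ q then (1 + 2 * γ) * (1 + |q|) ^ (2 * γ) else (γ / 2) * (1 + |q|) ^ (-(γ / 2) - 1)

noncomputable def matNorm (H : (Fin 4 → ℝ) → Fin 4 → Fin 4 → ℝ) (p : Fin 4 → ℝ) : ℝ :=
  Real.sqrt (∑ α : Fin 4, ∑ β : Fin 4, (H p α β) ^ 2)

noncomputable def matLL (H : (Fin 4 → ℝ) → Fin 4 → Fin 4 → ℝ) (p : Fin 4 → ℝ) : ℝ :=
  |∑ α : Fin 4, ∑ β : Fin 4, H p α β * Llow p α * Llow p β|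

noncomputable def dmatNorm (H : (Fin 4 → ℝ) → Fin 4 → Fin 4 → ℝ) (p : Fin 4 → ℝ) : ℝ :=
  Real.sqrt (∑ c : Fin 4, ∑ α : Fin 4, ∑ β : Fin 4, (pd c (fun y => H y α β) p) ^ 2)

noncomputable def dmatLL (H : (Fin 4 → ℝ) → Fin 4 → Fin 4 → ℝ) (p : Fin 4 → ℝ) : ℝ :=
  Real.sqrt (∑ u : Fin 5,
    (∑ α : Fin 4, ∑ β : Fin 4,
      fderiv ℝ (fun y => H y α β) p (frameVF u p) * Llow p α * Llow p β) ^ 2)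

noncomputable def gdmatNorm (H : (Fin 4 → ℝ) → Fin 4 → Fin 4 → ℝ) (p : Fin 4 → ℝ) : ℝ :=
  Real.sqrt (∑ α : Fin 4, ∑ β : Fin 4, goodNormSq (fun y => H y α β) p)

/-- The weight `ϖ(q) = (1+|q|)^{1/2−γ/4} w(q)^{1/2}`. -/
noncomputable def piw (γ q : ℝ) : ℝ :=
  (1 + |q|) ^ ((1 : ℝ) / 2 - γ / 4) * (wgt γ q) ^ ((1 : ℝ) / 2)

/-- The annulus `D_τ = {x ∈ ℝ³ : τ/2 ≤ |x| ≤ 2τ}`. -/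
def Dball (τ : ℝ) : Set (Fin 3 → ℝ) := {x | τ / 2 ≤ rad3 x ∧ rad3 x ≤ 2 * τ}

theorem aux_sup_le (τ B : ℝ) (hτ : 0 ≤ τ) (hB : 0 ≤ B) (f : (Fin 3 → ℝ) → ℝ)
    (h : ∀ x ∈ Dball τ, f x ≤ B) :
    ENNReal.ofReal ((1 + τ) * (⨆ x ∈ Dball τ, f x)) ≤ ENNReal.ofReal ((1 + τ) * B) := by
  apply ENNReal.ofReal_le_ofReal
  apply mul_le_mul_of_nonneg_left _ (by linarith)
  exact Real.iSup_le (fun x => Real.iSup_le (fun hx => h x hx) hB) hB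

theorem wgt_one_le (γ q : ℝ) : 1 ≤ wgt γ q := by
  unfold wgt
  split_ifs
  · have : 0 ≤ (1 + |q|) ^ (1 + 2 * γ) := by positivity
    linarith
  · have : 0 ≤ (1 + |q|) ^ (-(γ / 2)) := by positivity
    linarith

theorem wgt_le (γ q : ℝ) (hγ : 0 < γ) : wgt γ q ≤ 2 * (1 + |q|) ^ (1 + 2 * γ) := by
  have h1 : 1 ≤ 1 + |q| := by linarith [abs_nonneg q]
  have h2 : 1 ≤ (1 + |q|) ^ (1 + 2 * γ) := Real.one_le_rpow h1 (by linarith)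
  unfold wgt
  split_ifs
  · linarith
  · have : (1 + |q|) ^ (-(γ / 2)) ≤ 1 := Real.rpow_le_one_of_one_le_of_nonpos h1 (by linarith)
    linarith

theorem bound_a (γ δ τ r : ℝ) (hγ0 : 0 < γ) (hδ : 0 < δ) (hδ1 : δ < γ / 4)
    (hτ : 0 ≤ τ) (hr : 0 ≤ r) :
    piw γ (r - τ) * (Real.log (2 + τ + r)) ^ 2 /
      ((1 + τ + r) ^ (2 + γ / 2) * (1 + |r - τ|) ^ ((1 : ℝ) / 2 - γ / 2 - δ)
        * (wgt γ (r - τ)) ^ ((1 : ℝ) / 2))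
      ≤ (2 ^ ((γ / 4 - δ) / 4) / ((γ / 4 - δ) / 4)) ^ 2 * (1 + τ) ^ (-2 - (γ / 4 - δ) / 2) := by
  set e := (γ / 4 - δ) / 4 with he
  have he0 : 0 < e := by rw [he]; linarith
  have hw := wgt_one_le γ (r - τ)
  set W := wgt γ (r - τ)
  unfold piw
  change (1 + |r - τ|) ^ ((1 : ℝ) / 2 - γ / 4) * W ^ ((1 : ℝ) / 2) * _ / _ ≤ _
  have hWp : 0 < W ^ ((1 : ℝ) / 2) := Real.rpow_pos_of_pos (by linarith) _
  have hq : |r - τ| ≤ τ + r := by rw [abs_le]; constructor <;> linarith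
  set Q := 1 + |r - τ| with hQ
  have hQ1 : 1 ≤ Q := by linarith [abs_nonneg (r - τ)]
  have hL : Real.log (2 + τ + r) ≤ 2 ^ e / e * (1 + τ + r) ^ e := by
    calc Real.log (2 + τ + r) ≤ Real.log (2 * (1 + τ + r)) :=
          Real.log_le_log (by linarith) (by linarith)
      _ ≤ (2 * (1 + τ + r)) ^ e / e := Real.log_le_rpow_div (by linarith) he0
      _ = _ := by rw [Real.mul_rpow (by norm_num) (by linarith)]; ring
  have hL0 : 0 ≤ Real.log (2 + τ + r) := Real.log_nonneg (by linarith)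
  set S := 1 + τ + r with hS
  have hS1 : 1 ≤ S := by linarith
  have hSp : 0 < S := by linarith
  have hQp : 0 < Q := by linarith
  have hQS : Q ≤ S := by linarith
  have e1 : Q ^ ((1 : ℝ) / 2 - γ / 4) = Q ^ ((1 : ℝ) / 2 - γ / 2 - δ) * Q ^ (γ / 4 + δ) := by
    rw [← Real.rpow_add hQp]; congr 1; ring
  have hQe : 0 < Q ^ ((1 : ℝ) / 2 - γ / 2 - δ) := Real.rpow_pos_of_pos hQp _
  have hSe : 0 < S ^ (2 + γ / 2) := Real.rpow_pos_of_pos hSp _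
  have hQ2 : Q ^ (γ / 4 + δ) ≤ S ^ (γ / 4 + δ) :=
    Real.rpow_le_rpow hQp.le hQS (by linarith)
  have hL2 : (Real.log (2 + τ + r)) ^ 2 ≤ (2 ^ e / e * S ^ e) ^ 2 := by gcongr
  have key : S ^ (-2 - (γ / 4 - δ) / 2) ≤ (1 + τ) ^ (-2 - (γ / 4 - δ) / 2) :=
    Real.rpow_le_rpow_of_nonpos (by linarith) (by linarith) (by linarith)
  calc _ = Q ^ (γ / 4 + δ) * (Real.log (2 + τ + r)) ^ 2 / S ^ (2 + γ / 2) := by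
        rw [e1]; field_simp
    _ ≤ S ^ (γ / 4 + δ) * (2 ^ e / e * S ^ e) ^ 2 / S ^ (2 + γ / 2) := by gcongr
    _ = (2 ^ e / e) ^ 2 * S ^ (-2 - (γ / 4 - δ) / 2) := by
        have : S ^ (-2 - (γ / 4 - δ) / 2) = S ^ (γ / 4 + δ) * (S ^ e * S ^ e) / S ^ (2 + γ / 2) := by
          rw [← Real.rpow_add hSp, ← Real.rpow_add hSp, ← Real.rpow_sub hSp]
          congr 1; rw [he]; ring
        rw [this]; ring
    _ ≤ _ := by gcongr

theorem bound_b (γ τ r t : ℝ) (hγ0 : 0 < γ)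
    (hτ : 0 ≤ τ) (hr : 0 ≤ r) (hr2 : r ≤ 2 * τ) (ht : τ ≤ t) :
    piw γ (r - τ) * (Real.log (2 + τ + r)) ^ 2 /
      ((1 + τ + r) ^ 2 * (1 + |r - τ|) * (wgt γ (r - τ)) ^ (γ / (1 + 2 * γ)))
      ≤ 8 * Real.log (2 + t) ^ 2 / (1 + τ) ^ 2 := by
  have hw := wgt_one_le γ (r - τ)
  have hw2 := wgt_le γ (r - τ) hγ0
  unfold piw
  set W := wgt γ (r - τ)
  have hL : Real.log (2 + τ + r) ≤ 2 * Real.log (2 + t) := by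
    calc Real.log (2 + τ + r) ≤ Real.log ((2 + t) ^ 2) :=
          Real.log_le_log (by linarith) (by nlinarith)
      _ = _ := by rw [Real.log_pow]; norm_num
  have hL0 : 0 ≤ Real.log (2 + τ + r) := Real.log_nonneg (by linarith)
  have hL2 : Real.log (2 + τ + r) ^ 2 ≤ (2 * Real.log (2 + t)) ^ 2 := by gcongr
  set Q := 1 + |r - τ| with hQ
  have hQ1 : 1 ≤ Q := by linarith [abs_nonneg (r - τ)]
  have hQp : 0 < Q := by linarith
  have hWp : 0 < W := by linarith
  have e1 : W ^ ((1 : ℝ) / 2) = W ^ (γ / (1 + 2 * γ)) * W ^ (1 / (2 * (1 + 2 * γ))) := by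
    rw [← Real.rpow_add hWp]; congr 1; field_simp; ring
  have hWe : 0 < W ^ (γ / (1 + 2 * γ)) := Real.rpow_pos_of_pos hWp _
  have hW2 : W ^ (1 / (2 * (1 + 2 * γ))) ≤ 2 * Q ^ ((1 : ℝ) / 2) := by
    calc W ^ (1 / (2 * (1 + 2 * γ))) ≤ (2 * Q ^ (1 + 2 * γ)) ^ (1 / (2 * (1 + 2 * γ))) :=
          Real.rpow_le_rpow hWp.le hw2 (by positivity)
      _ = 2 ^ (1 / (2 * (1 + 2 * γ))) * Q ^ ((1 : ℝ) / 2) := by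
          rw [Real.mul_rpow (by norm_num) (by positivity), ← Real.rpow_mul hQp.le]
          congr 2; field_simp
      _ ≤ 2 ^ (1 : ℝ) * Q ^ ((1 : ℝ) / 2) := by
          gcongr
          · norm_num
          · rw [div_le_one (by positivity)]; linarith
      _ = _ := by rw [Real.rpow_one]
  have hQQ : Q ^ ((1 : ℝ) / 2 - γ / 4) * Q ^ ((1 : ℝ) / 2) ≤ Q := by
    rw [← Real.rpow_add hQp]
    calc _ ≤ Q ^ (1 : ℝ) := Real.rpow_le_rpow_of_exponent_le hQ1 (by linarith)
      _ = Q := Real.rpow_one _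
  have hτr : 1 + τ ≤ 1 + τ + r := by linarith
  have hS : 0 < 1 + τ + r := by linarith
  calc _ = Q ^ ((1 : ℝ) / 2 - γ / 4) * W ^ (1 / (2 * (1 + 2 * γ))) * Real.log (2 + τ + r) ^ 2
          / ((1 + τ + r) ^ 2 * Q) := by
        rw [e1]
        generalize W ^ (1 / (2 * (1 + 2 * γ))) = A
        generalize W ^ (γ / (1 + 2 * γ)) = B at *
        field_simp
    _ ≤ Q ^ ((1 : ℝ) / 2 - γ / 4) * (2 * Q ^ ((1 : ℝ) / 2)) * (2 * Real.log (2 + t)) ^ 2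
          / ((1 + τ + r) ^ 2 * Q) := by gcongr
    _ = (Q ^ ((1 : ℝ) / 2 - γ / 4) * Q ^ ((1 : ℝ) / 2)) * (8 * Real.log (2 + t) ^ 2)
          / ((1 + τ + r) ^ 2 * Q) := by ring
    _ ≤ Q * (8 * Real.log (2 + t) ^ 2) / ((1 + τ + r) ^ 2 * Q) := by gcongr
    _ = 8 * Real.log (2 + t) ^ 2 / (1 + τ + r) ^ 2 := by field_simp
    _ ≤ _ := by gcongr

/-- Sharp-decay integral bounds for the inhomogeneous term: (a) for
every `δ₀ ∈ (0, γ/4)` the integral over `τ ∈ (0,∞)` of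
`(1+τ)·sup_{x∈D_τ}[ϖ log²(2+s)/((1+s)^{2+γ/2}(1+|q|)^{1/2−γ/2−δ₀} w^{1/2})]` is finite;
(b) the integral over `τ ∈ [0,t]` of
`(1+τ)·sup_{x∈D_τ}[ϖ log²(2+s)/((1+s)²(1+|q|) w^{γ/(1+2γ)})]` is `≲ log³(2+t)`. -/
theorem stmt18 (γ : ℝ) (hγ0 : 0 < γ) (hγ1 : γ ≤ 1 / 8) :
    (∀ δ₀ : ℝ, 0 < δ₀ → δ₀ < γ / 4 →
      ∃ C > (0 : ℝ),
        (∫⁻ τ in Set.Ioi (0 : ℝ),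
          ENNReal.ofReal ((1 + τ) *
            (⨆ x ∈ Dball τ,
              piw γ (rad3 x - τ) * (Real.log (2 + τ + rad3 x)) ^ 2 /
                ((1 + τ + rad3 x) ^ (2 + γ / 2)
                  * (1 + |rad3 x - τ|) ^ ((1 : ℝ) / 2 - γ / 2 - δ₀)
                  * (wgt γ (rad3 x - τ)) ^ ((1 : ℝ) / 2)))))
          ≤ ENNReal.ofReal C)
    ∧ (∃ C > (0 : ℝ), ∀ t : ℝ, 0 ≤ t →
        (∫⁻ τ in Set.Icc (0 : ℝ) t,
          ENNReal.ofReal ((1 + τ) *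
            (⨆ x ∈ Dball τ,
              piw γ (rad3 x - τ) * (Real.log (2 + τ + rad3 x)) ^ 2 /
                ((1 + τ + rad3 x) ^ 2 * (1 + |rad3 x - τ|)
                  * (wgt γ (rad3 x - τ)) ^ (γ / (1 + 2 * γ))))))
          ≤ ENNReal.ofReal (C * (Real.log (2 + t)) ^ 3)) := by
  constructor
  · intro δ hδ hδ1
    set K := (2 ^ ((γ / 4 - δ) / 4) / ((γ / 4 - δ) / 4)) ^ 2 with hK
    have hK0 : 0 ≤ K := by positivity
    set g : ℝ → ℝ := fun τ => K * (τ + 1) ^ (-1 - (γ / 4 - δ) / 2) with hg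
    have hint : IntegrableOn g (Set.Ioi 0) :=
      (integrableOn_add_rpow_Ioi_of_lt (by linarith) (by norm_num)).const_mul K
    have hg0 : ∀ τ ∈ Set.Ioi (0 : ℝ), 0 ≤ g τ := by
      intro τ hτ
      have hτ' : (0 : ℝ) < τ := hτ
      simp only [hg]; positivity
    have hI : 0 ≤ ∫ τ in Set.Ioi (0 : ℝ), g τ := setIntegral_nonneg measurableSet_Ioi hg0
    refine ⟨(∫ τ in Set.Ioi (0 : ℝ), g τ) + 1, by linarith, ?_⟩
    calc _ ≤ ∫⁻ τ in Set.Ioi (0 : ℝ), ENNReal.ofReal (g τ) := by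
          apply setLIntegral_mono' measurableSet_Ioi
          intro τ hτ
          have hτ' : (0 : ℝ) < τ := hτ
          refine (aux_sup_le τ (K * (1 + τ) ^ (-2 - (γ / 4 - δ) / 2)) hτ'.le (by positivity) _
            (fun x hx => bound_a γ δ τ (rad3 x) hγ0 hδ hδ1 hτ'.le (Real.sqrt_nonneg _))).trans ?_
          apply ENNReal.ofReal_le_ofReal
          apply le_of_eq
          have : (τ + 1) ^ (-1 - (γ / 4 - δ) / 2)
              = (1 + τ) * (1 + τ) ^ (-2 - (γ / 4 - δ) / 2) := by
            rw [add_comm τ 1]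
            nth_rewrite 2 [← Real.rpow_one (1 + τ)]
            rw [← Real.rpow_add (by linarith)]
            congr 1; ring
          simp only [hg]
          rw [this]; ring
      _ = ENNReal.ofReal (∫ τ in Set.Ioi (0 : ℝ), g τ) := by
          rw [ofReal_integral_eq_lintegral_ofReal hint
            ((ae_restrict_iff' measurableSet_Ioi).2 (Filter.Eventually.of_forall hg0))]
      _ ≤ _ := ENNReal.ofReal_le_ofReal (by linarith)
  · refine ⟨8, by norm_num, fun t ht => ?_⟩
    set M := 8 * Real.log (2 + t) ^ 2 with hM
    have hM0 : 0 ≤ M := by positivity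
    set g : ℝ → ℝ := fun τ => M * (1 + τ)⁻¹ with hg
    have hcont : ContinuousOn (fun τ : ℝ => (1 + τ)⁻¹) (Set.Icc 0 t) := by
      apply ContinuousOn.inv₀ (by fun_prop)
      intro x hx
      have := hx.1
      linarith
    have hint : IntegrableOn g (Set.Icc 0 t) :=
      (hcont.integrableOn_Icc).const_mul M
    have hg0 : ∀ τ ∈ Set.Icc (0 : ℝ) t, 0 ≤ g τ := by
      intro τ hτ
      have hτ' : (0 : ℝ) ≤ τ := hτ.1
      simp only [hg]; positivity
    have hI : ∫ τ in Set.Icc (0 : ℝ) t, g τ = M * Real.log (1 + t) := by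
      rw [integral_Icc_eq_integral_Ioc, ← intervalIntegral.integral_of_le ht]
      simp only [hg]
      rw [intervalIntegral.integral_const_mul,
        intervalIntegral.integral_eq_sub_of_hasDerivAt (f := fun τ => Real.log (1 + τ))]
      · simp
      · intro x hx
        rw [Set.uIcc_of_le ht] at hx
        have h1 : (1 + x) ≠ 0 := by linarith [hx.1]
        have := ((hasDerivAt_id x).const_add 1).log h1
        simpa using this
      · apply ContinuousOn.intervalIntegrable
        rwa [Set.uIcc_of_le ht]
    calc _ ≤ ∫⁻ τ in Set.Icc (0 : ℝ) t, ENNReal.ofReal (g τ) := by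
          apply setLIntegral_mono' measurableSet_Icc
          intro τ hτ
          have hτ' : (0 : ℝ) ≤ τ := hτ.1
          refine (aux_sup_le τ (M / (1 + τ) ^ 2) hτ' (by positivity) _
            (fun x hx => bound_b γ τ (rad3 x) t hγ0 hτ' (Real.sqrt_nonneg _) hx.2 hτ.2)).trans ?_
          apply ENNReal.ofReal_le_ofReal
          apply le_of_eq
          simp only [hg]
          field_simp
      _ = ENNReal.ofReal (∫ τ in Set.Icc (0 : ℝ) t, g τ) := by
          rw [ofReal_integral_eq_lintegral_ofReal hint
            ((ae_restrict_iff' measurableSet_Icc).2 (Filter.Eventually.of_forall hg0))]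
      _ ≤ _ := by
          apply ENNReal.ofReal_le_ofReal
          rw [hI]
          have h1 : Real.log (1 + t) ≤ Real.log (2 + t) :=
            Real.log_le_log (by linarith) (by linarith)
          calc M * Real.log (1 + t) ≤ M * Real.log (2 + t) := by gcongr
            _ = _ := by rw [hM]; ring
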